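/- The uniform-price knapsack auction is dominant-strategy incentive compatible: for every bidder i, every profile of per-unit bids of the other bidders (pairwise distinct and distinct from the bids of i considered), and every per-unit bid b_i, the utility bidder i obtains by bidding truthfully (b_i = v_i/k_i) under the Greedy allocation with uniform-price payments is at least the utility obtained by bidding b_i. -/

import Mathlib

/-!
Being packed is the same as having one's own prefix of the bid order fit into the knapsack
(`packs_iff`), and three facts follow for a bidder `i` facing fixed bids of the others.

* Whenever `i` wins, the price does not depend on `i`'s bid: the other bidders who lose are the
  same for every winning bid (`packs_update`, `highestLosingBid_update`).
* A winner with a nonnegative bid pays at most that bid per unit (`highestLosingBid_le`).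
* If `i` would lose with bid `t` but wins with another bid, the price per unit is at least `t`
  (`le_highestLosingBid`).

With `t = v / k i`, truthful bidding earns a nonnegative utility, a deviation from a winning truthful
bid to another winning bid changes nothing, and a deviation from a losing truthful bid to a winning
one earns at most `v - k i * t = 0`.
-/

open Finset
open scoped Classical

noncomputable section

/-- `packs K k b i` : bidder `i`'s object is packed by the Greedy algorithm when the
knapsack has capacity `K`, objects have sizes `k`, and bidders submit the (pairwise
distinct) per-unit bids `b`.  The Greedy algorithm orders bidders by strictly decreasing
per-unit bid and fills the knapsack until the next object in line does not fit, so `i`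
is packed iff every prefix of the bid-decreasing order ending at a bidder `j` with
`b j ≥ b i` fits into the knapsack. -/
def packs {n : ℕ} (K : ℝ) (k b : Fin n → ℝ) (i : Fin n) : Prop :=
  ∀ j : Fin n, b i ≤ b j → ∑ l ∈ univ.filter (fun l => b j ≤ b l), k l ≤ K

/-- The highest losing per-unit bid (`b_{m+1}` in the paper): the largest per-unit bid
among bidders whose object is not packed by the Greedy algorithm. -/
def highestLosingBid {n : ℕ} (K : ℝ) (k b : Fin n → ℝ) : ℝ :=
  if h : (univ.filter (fun j => ¬ packs K k b j)).Nonempty then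
    (univ.filter (fun j => ¬ packs K k b j)).sup' h b
  else 0

/-- Bidder `i`'s utility in the uniform-price (UP) knapsack auction when `i`'s value is
`v` : if `i`'s object is packed, `i` realizes `v` and pays `k i` times the highest
losing per-unit bid; otherwise `i` gets `0`. -/
def upUtility {n : ℕ} (K : ℝ) (k : Fin n → ℝ) (v : ℝ) (b : Fin n → ℝ) (i : Fin n) : ℝ :=
  if packs K k b i then v - k i * highestLosingBid K k b else 0

lemma packs_iff {n : ℕ} {K : ℝ} {k b : Fin n → ℝ} (hk : ∀ i, 0 < k i) {i : Fin n} :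
    packs K k b i ↔ ∑ l ∈ univ.filter (fun l => b i ≤ b l), k l ≤ K := by
  refine ⟨fun h => h i le_rfl, fun h j hj => le_trans ?_ h⟩
  refine sum_le_sum_of_subset_of_nonneg (fun l => ?_) (fun l _ _ => (hk l).le)
  simpa using hj.trans

/-- A winner `i` who changes bid does not turn any other winner `j` into a loser: the new prefix of
`j` is contained in the old prefix of `i` or of `j`, whichever of them bid less. -/
lemma packs_update {n : ℕ} {K : ℝ} {k b : Fin n → ℝ} (hk : ∀ i, 0 < k i) {i j : Fin n} {x y : ℝ}
    (hij : j ≠ i) (hi : packs K k (Function.update b i x) i)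
    (hj : packs K k (Function.update b i x) j) : packs K k (Function.update b i y) j := by
  rw [packs_iff hk] at *
  rcases le_or_gt x (b j) with h | h
  · refine le_trans (sum_le_sum_of_subset_of_nonneg (fun l => ?_) (fun l _ _ => (hk l).le)) hi
    by_cases hl : l = i
    · subst hl; simp
    · simpa [hl, hij] using h.trans
  · refine le_trans (sum_le_sum_of_subset_of_nonneg (fun l => ?_) (fun l _ _ => (hk l).le)) hj
    by_cases hl : l = i
    · subst hl; simp [hij, h.le]
    · simp [hl, hij]

/-- The price faced by a winner is independent of the winning bid. -/
lemma highestLosingBid_update {n : ℕ} {K : ℝ} {k b : Fin n → ℝ} (hk : ∀ i, 0 < k i) {i : Fin n}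
    {x y : ℝ} (hx : packs K k (Function.update b i x) i)
    (hy : packs K k (Function.update b i y) i) :
    highestLosingBid K k (Function.update b i x) = highestLosingBid K k (Function.update b i y) := by
  have hset : univ.filter (fun j => ¬ packs K k (Function.update b i x) j)
      = univ.filter (fun j => ¬ packs K k (Function.update b i y) j) := by
    ext j
    by_cases hj : j = i
    · subst hj; simp [hx, hy]
    · simpa using not_congr ⟨packs_update hk hj hx, packs_update hk hj hy⟩
  unfold highestLosingBid
  split_ifs with h1 h2 h2
  · refine sup'_congr h1 hset fun j hj => ?_
    have hji : j ≠ i := by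
      rintro rfl
      simp [hx] at hj
    simp [hji]
  · exact absurd (hset ▸ h1) h2
  · exact absurd (hset ▸ h2) h1
  · rfl

/-- Nonnegativity of the bid covers the default price `0` used when there is no loser. -/
lemma highestLosingBid_le {n : ℕ} {K : ℝ} {k b : Fin n → ℝ} {i : Fin n} (hb : 0 ≤ b i)
    (hi : packs K k b i) : highestLosingBid K k b ≤ b i := by
  unfold highestLosingBid
  split_ifs with h
  · refine sup'_le _ _ fun j hj => ?_
    by_contra! hlt
    exact (mem_filter.1 hj).2 fun l hl => hi l (hlt.le.trans hl)
  · exact hb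

/-- If `i` loses with bid `t` and wins with bid `y`, some other bidder with bid at least `t` must
lose in the latter case, so the price is at least `t`. -/
lemma le_highestLosingBid {n : ℕ} {K : ℝ} {k b : Fin n → ℝ} (hk : ∀ i, 0 < k i) {i : Fin n}
    {t y : ℝ} (ht : ¬ packs K k (Function.update b i t) i)
    (hy : packs K k (Function.update b i y) i) :
    t ≤ highestLosingBid K k (Function.update b i y) := by
  obtain ⟨j, hj, htj⟩ : ∃ j, ¬ packs K k (Function.update b i y) j ∧
      t ≤ Function.update b i y j := by
    by_contra! hall
    refine ht ((packs_iff hk).2 ?_)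
    -- The lowest bidder `m`, at `i`'s bid `y`, among those in `i`'s prefix at bid `t` would be
    -- packed, and the prefix of `m` contains that whole set.
    obtain ⟨m, hm, hmin⟩ := exists_min_image
      (univ.filter fun l => Function.update b i t i ≤ Function.update b i t l)
      (Function.update b i y) ⟨i, by simp⟩
    have hpm : packs K k (Function.update b i y) m := by
      by_cases hmi : m = i
      · rwa [hmi]
      · by_contra hcon
        have := hall m hcon
        simp [hmi] at hm this
        linarith
    refine le_trans (sum_le_sum_of_subset_of_nonneg (fun l hl => ?_) (fun l _ _ => (hk l).le))
      ((packs_iff hk).1 hpm)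
    simpa using hmin l hl
  have hmem : j ∈ univ.filter (fun j => ¬ packs K k (Function.update b i y) j) := by simpa using hj
  unfold highestLosingBid
  rw [dif_pos ⟨j, hmem⟩]
  exact htj.trans (le_sup' _ hmem)

/-- **The UP knapsack auction is dominant-strategy incentive compatible.**  For every
bidder `i`, every profile `b` of the other bidders' per-unit bids (pairwise distinct
and distinct from the bids of `i` considered), and every per-unit bid `b'`, the utility
`i` obtains by bidding truthfully (`v / k i`) under the Greedy allocation with
uniform-price payments is at least the utility obtained by bidding `b'`. -/
theorem up_auction_DSIC {n : ℕ} (K : ℝ) (k : Fin n → ℝ)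
    (hK : 0 < K) (hk : ∀ i, 0 < k i) (hkK : ∀ i, k i < K) (hsum : K < ∑ i, k i)
    (i : Fin n) (v : ℝ) (hv : 0 ≤ v) (b : Fin n → ℝ) (b' : ℝ)
    (hinjT : Function.Injective (Function.update b i (v / k i)))
    (hinjD : Function.Injective (Function.update b i b')) :
    upUtility K k v (Function.update b i b') i
      ≤ upUtility K k v (Function.update b i (v / k i)) i := by
  have hki := hk i
  have hkv : k i * (v / k i) = v := mul_div_cancel₀ v hki.ne'
  unfold upUtility
  split_ifs with hD hT hT
  · rw [highestLosingBid_update hk hD hT]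
  · have h := mul_le_mul_of_nonneg_left (le_highestLosingBid hk hT hD) hki.le
    linarith
  · have h := highestLosingBid_le (by simpa using div_nonneg hv hki.le) hT
    rw [Function.update_self] at h
    have h' := mul_le_mul_of_nonneg_left h hki.le
    linarith
  · exact le_rfl
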